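/- (Factorisation, jump part.) Suppose that for every n ≥ 1 the polynomial functions Q^{(n)} : ℂ^n → ℂ, with Q^{(1)} ≡ 1, satisfy the single-cluster bulk and jump equations: for every n ≥ 2 the function v ↦ (K̃(v) + (n³−n)γ)·Q^{(n)}(v) + β·Σ_{n₁+n₂=n, n₁,n₂≥1} √(n₁n₂n)·Q^{(n₁)}(v₁,…,v_{n₁})·Q^{(n₂)}(v_{n₁+1},…,v_n) is 𝔓_{[1,n]}-reducible on ℂ^n, and for every n₁, n₂ ≥ 1 with n₁+n₂ = n the function v ↦ V_{n₁n₂}(v)·Q^{(n₁)}(v₁,…,v_{n₁})·Q^{(n₂)}(v_{n₁+1},…,v_n) + V_{n₂n₁}(v)·Q^{(n₂)}(v₁,…,v_{n₂})·Q^{(n₁)}(v_{n₂+1},…,v_n) + 2n₁n₂β_{n₁n₂}·Q^{(n)}(v) is 𝔓_{[1,n]}-reducible on ℂ^n. Then for every composition m = (m₁,…,m_N) of M, every 1 ≤ k ≤ N, every n₁, n₂ ≥ 1 with n₁+n₂ = m_k, and every x ∈ ℝ^N, the function v ↦ [ V_{n₁n₂}(w_k(v))·Q^{m'}(v) + V_{n₂n₁}(w_k(v))·Q^{m''}(v)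 + 2n₁n₂β_{n₁n₂}·Q^m(v) ] · exp(Σ_{j=1}^N ⟨w_j(v)⟩ x_j) is 𝔓_{[1,M]}-reducible on ℂ^M, where Q^m(v) = ∏_{j=1}^N Q^{(m_j)}(w_j(v)), m' = (m₁,…,m_{k−1}, n₁, n₂, m_{k+1},…,m_N), and m'' = (m₁,…,m_{k−1}, n₂, n₁, m_{k+1},…,m_N). -/

import Mathlib

open scoped BigOperators

/-- The cubic polynomial `P(v) = v³ + 12γv − 4β²`. -/
noncomputable def Pcub (β γ v : ℂ) : ℂ := v ^ 3 + 12 * γ * v - 4 * β ^ 2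

/-- `ℙ_{[a,b]}(v) = ∏_{a ≤ j < k ≤ b} P(v_k − v_j)` (indices 1-based). -/
noncomputable def Pprod (β γ : ℂ) (M a b : ℕ) (v : Fin M → ℂ) : ℂ :=
  ∏ j : Fin M, ∏ k : Fin M,
    if a ≤ j.val + 1 ∧ j < k ∧ k.val + 1 ≤ b then Pcub β γ (v k - v j) else 1

/- `(𝔓_{[a,b]} g)(v) = Σ_{𝔰 ∈ 𝔖_{[a,b]}} sgn(𝔰) ℙ_{[a,b]}(𝔰·v) g(𝔰·v)`: the
sum runs over permutations fixing every (1-based) index outside `[a,b]`, and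
`(𝔰·v)_j = v_{𝔰(j)}`. -/
open Classical in
noncomputable def Pop (β γ : ℂ) (M a b : ℕ) (g : (Fin M → ℂ) → ℂ) (v : Fin M → ℂ) : ℂ :=
  ∑ s : Equiv.Perm (Fin M),
    if ∀ i : Fin M, ¬ (a ≤ i.val + 1 ∧ i.val + 1 ≤ b) → s i = i then
      ((Equiv.Perm.sign s : ℤ) : ℂ) * Pprod β γ M a b (v ∘ s) * g (v ∘ s)
    else 0

/-- `g` is `𝔓_{[a,b]}`-reducible if `𝔓_{[a,b]} g ≡ 0`. -/
def PReducible (β γ : ℂ) (M a b : ℕ) (g : (Fin M → ℂ) → ℂ) : Prop :=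
  ∀ v : Fin M → ℂ, Pop β γ M a b g v = 0

/-- The segment `(v_{a+1}, …, v_{a+len})` of a vector `v ∈ ℂ^M` (0-based start `a`);
out-of-range entries (never used below) default to `0`. -/
noncomputable def seg (M a len : ℕ) (v : Fin M → ℂ) : Fin len → ℂ :=
  fun i => if h : a + i.val < M then v ⟨a + i.val, h⟩ else 0

/-- `⟨w⟩ = Σ_i w_i`. -/
noncomputable def sumv {k : ℕ} (w : Fin k → ℂ) : ℂ := ∑ i, w i

/-- `K̃(w) = Σ_i w_i² − (Σ_i w_i)²/k`, the reduced kinetic energy of a cluster. -/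
noncomputable def Ktilde (k : ℕ) (w : Fin k → ℂ) : ℂ :=
  (∑ i, w i ^ 2) - (∑ i, w i) ^ 2 / (k : ℂ)

/-- `V_{n₁n₂}(u) = n₂(u₁+⋯+u_{n₁}) − n₁(u_{n₁+1}+⋯+u_{n₁+n₂})` for `u ∈ ℂ^k`
(`k = n₁ + n₂` in all uses). -/
noncomputable def Vseg (n₁ n₂ k : ℕ) (u : Fin k → ℂ) : ℂ :=
  (n₂ : ℂ) * sumv (seg k 0 n₁ u) - (n₁ : ℂ) * sumv (seg k n₁ n₂ u)

/-- `β_{n₁n₂} = β·√(n₁ n₂ (n₁+n₂))`. -/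
noncomputable def betaC (β : ℂ) (n₁ n₂ : ℕ) : ℂ :=
  β * (Real.sqrt ((n₁ : ℝ) * (n₂ : ℝ) * ((n₁ : ℝ) + (n₂ : ℝ))) : ℂ)

/-- `Q^m(v) = ∏_j Q^{(m_j)}(w_j(v))`, the factorised Ansatz attached to the
composition `m = (m₁, …, m_N)`, where `w_j(v)` is the `j`-th consecutive cluster
of `v` of size `m_j`. -/
noncomputable def Qm (Q : (n : ℕ) → (Fin n → ℂ) → ℂ) (M : ℕ) (m : List ℕ)
    (v : Fin M → ℂ) : ℂ :=
  ∏ j : Fin m.length, Q (m.get j) (seg M ((m.take j.val).sum) (m.get j) v)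

/-- The exponential factor `exp(Σ_j ⟨w_j(v)⟩ x_j)`. -/
noncomputable def expFactor (M : ℕ) (m : List ℕ) (x : Fin m.length → ℝ)
    (v : Fin M → ℂ) : ℂ :=
  Complex.exp (∑ j : Fin m.length,
    sumv (seg M ((m.take j.val).sum) (m.get j) v) * (x j : ℂ))

/-- The block embedding `i ↦ a + i` of `Fin n` into `Fin M`. -/
def blockEmb {M a n : ℕ} (hab : a + n ≤ M) : Fin n ↪ Fin M where
  toFun i := ⟨a + i.val, by omega⟩
  inj' i j h := by
    simp only [Fin.mk.injEq] at h
    exact Fin.ext (by omega)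

theorem blockEmb_val {M a n : ℕ} (hab : a + n ≤ M) (i : Fin n) :
    (blockEmb hab i).val = a + i.val :=
  rfl

theorem mem_range_blockEmb {M a n : ℕ} (hab : a + n ≤ M) (j : Fin M) :
    j ∈ Set.range (blockEmb hab) ↔ a ≤ j.val ∧ j.val < a + n := by
  constructor
  · rintro ⟨i, rfl⟩
    rw [blockEmb_val]
    omega
  · rintro ⟨h₁, h₂⟩
    exact ⟨⟨j.val - a, by omega⟩, Fin.ext (by rw [blockEmb_val]; dsimp only; omega)⟩

/-- A permutation of `Fin n` acting on the block `[a, a + n)` of `Fin M`. -/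
noncomputable def blockPerm {M a n : ℕ} (hab : a + n ≤ M) (t : Equiv.Perm (Fin n)) :
    Equiv.Perm (Fin M) :=
  t.viaFintypeEmbedding (blockEmb hab)

theorem blockPerm_blockEmb {M a n : ℕ} (hab : a + n ≤ M) (t : Equiv.Perm (Fin n)) (i : Fin n) :
    blockPerm hab t (blockEmb hab i) = blockEmb hab (t i) :=
  Equiv.Perm.viaFintypeEmbedding_apply_image ..

theorem blockPerm_of_outside {M a n : ℕ} (hab : a + n ≤ M) (t : Equiv.Perm (Fin n)) (j : Fin M)
    (hj : ¬ (a ≤ j.val ∧ j.val < a + n)) : blockPerm hab t j = j :=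
  Equiv.Perm.viaFintypeEmbedding_apply_notMem_range _ _
    (by rwa [mem_range_blockEmb])

theorem blockPerm_mem_iff {M a n : ℕ} (hab : a + n ≤ M) (t : Equiv.Perm (Fin n)) (j : Fin M) :
    (a ≤ (blockPerm hab t j).val ∧ (blockPerm hab t j).val < a + n) ↔
      (a ≤ j.val ∧ j.val < a + n) := by
  by_cases hj : a ≤ j.val ∧ j.val < a + n
  · obtain ⟨i, rfl⟩ := (mem_range_blockEmb hab j).2 hj
    rw [blockPerm_blockEmb, ← mem_range_blockEmb hab, ← mem_range_blockEmb hab]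
    simp
  · rw [blockPerm_of_outside hab t j hj]

theorem seg_eq_comp_blockEmb {M a n : ℕ} (hab : a + n ≤ M) (v : Fin M → ℂ) :
    seg M a n v = v ∘ blockEmb hab := by
  funext i
  have : a + i.val < M := by omega
  simp only [seg, this, dif_pos, Function.comp_apply]
  rfl

theorem seg_comp_blockPerm {M a n : ℕ} (hab : a + n ≤ M) (t : Equiv.Perm (Fin n))
    (v : Fin M → ℂ) : seg M a n (v ∘ blockPerm hab t) = seg M a n v ∘ t := by
  funext i
  simp [seg_eq_comp_blockEmb hab, blockPerm_blockEmb]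

theorem seg_comp_blockPerm_of_disjoint {M a n : ℕ} (hab : a + n ≤ M) (t : Equiv.Perm (Fin n))
    (v : Fin M → ℂ) (b len : ℕ) (h : b + len ≤ a ∨ a + n ≤ b) :
    seg M b len (v ∘ blockPerm hab t) = seg M b len v := by
  funext i
  simp only [seg, Function.comp_apply]
  split_ifs with hi
  · rw [blockPerm_of_outside]
    simp only
    omega
  · rfl

theorem seg_seg {M a n b len : ℕ} (h : b + len ≤ n) (v : Fin M → ℂ) :
    seg n b len (seg M a n v) = seg M (a + b) len v := by
  funext i
  have : b + i.val < n := by omega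
  simp [seg, this, add_assoc]

theorem Pprod_full (β γ : ℂ) (M : ℕ) (v : Fin M → ℂ) :
    Pprod β γ M 1 M v = ∏ j : Fin M, ∏ k : Fin M, if j < k then Pcub β γ (v k - v j) else 1 := by
  refine Finset.prod_congr rfl fun j _ => Finset.prod_congr rfl fun k _ => ?_
  have : k.val + 1 ≤ M := k.isLt
  simp [this]

theorem Pop_full (β γ : ℂ) (M : ℕ) (g : (Fin M → ℂ) → ℂ) (v : Fin M → ℂ) :
    Pop β γ M 1 M g v = ∑ s : Equiv.Perm (Fin M),
      ((Equiv.Perm.sign s : ℤ) : ℂ) * Pprod β γ M 1 M (v ∘ s) * g (v ∘ s) := by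
  refine Finset.sum_congr rfl fun s _ => if_pos fun i hi => ?_
  exact absurd ⟨by omega, i.isLt⟩ hi

/-- The factors of `ℙ_{[1,M]}` whose two indices do not both lie in the block `[a, a + n)`. -/
noncomputable def offBlockProd (β γ : ℂ) (M a n : ℕ) (v : Fin M → ℂ) : ℂ :=
  ∏ j : Fin M, ∏ k : Fin M,
    if j < k ∧ ¬ ((a ≤ j.val ∧ j.val < a + n) ∧ (a ≤ k.val ∧ k.val < a + n))
    then Pcub β γ (v k - v j) else 1

theorem offBlockProd_comp_blockPerm (β γ : ℂ) {M a n : ℕ} (hab : a + n ≤ M)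
    (t : Equiv.Perm (Fin n)) (v : Fin M → ℂ) :
    offBlockProd β γ M a n (v ∘ blockPerm hab t) = offBlockProd β γ M a n v := by
  unfold offBlockProd
  rw [← Equiv.prod_comp (blockPerm hab t) (fun j => ∏ k : Fin M,
    if j < k ∧ ¬ ((a ≤ j.val ∧ j.val < a + n) ∧ (a ≤ k.val ∧ k.val < a + n))
    then Pcub β γ (v k - v j) else 1)]
  refine Finset.prod_congr rfl fun j _ => ?_
  refine (Finset.prod_congr rfl fun k _ => ?_).trans (Equiv.prod_comp (blockPerm hab t) _)
  refine if_congr ?_ rfl rfl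
  have hj := blockPerm_mem_iff hab t j
  have hk := blockPerm_mem_iff hab t k
  have hj' := blockPerm_of_outside hab t j
  have hk' := blockPerm_of_outside hab t k
  symm
  rw [hj, hk]
  refine and_congr_left fun hjk => ?_
  rw [Fin.lt_def, Fin.lt_def]
  by_cases h₁ : a ≤ j.val ∧ j.val < a + n
  · have h₂ : ¬ (a ≤ k.val ∧ k.val < a + n) := fun h => hjk ⟨h₁, h⟩
    rw [hk' h₂]
    have := hj.2 h₁
    omega
  · rw [hj' h₁]
    by_cases h₂ : a ≤ k.val ∧ k.val < a + n
    · have := hk.2 h₂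
      omega
    · rw [hk' h₂]

theorem Pprod_eq_block_mul (β γ : ℂ) {M a n : ℕ} (hab : a + n ≤ M) (v : Fin M → ℂ) :
    Pprod β γ M 1 M v = Pprod β γ n 1 n (seg M a n v) * offBlockProd β γ M a n v := by
  have hblock : Pprod β γ n 1 n (seg M a n v) = ∏ j : Fin M, ∏ k : Fin M,
      if j < k ∧ ((a ≤ j.val ∧ j.val < a + n) ∧ (a ≤ k.val ∧ k.val < a + n))
      then Pcub β γ (v k - v j) else 1 := by
    rw [Pprod_full]
    refine Fintype.prod_of_injective (blockEmb hab) (blockEmb hab).injective _ _ ?_ ?_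
    · intro j hj
      rw [mem_range_blockEmb] at hj
      exact Finset.prod_eq_one fun k _ => if_neg fun h => hj h.2.1
    · intro j
      refine Fintype.prod_of_injective (blockEmb hab) (blockEmb hab).injective _ _ ?_ ?_
      · intro k hk
        rw [mem_range_blockEmb] at hk
        exact if_neg fun h => hk h.2.2
      · intro k
        rw [seg_eq_comp_blockEmb hab]
        refine if_congr ?_ rfl rfl
        rw [Fin.lt_def, Fin.lt_def, blockEmb_val, blockEmb_val]
        omega
  rw [hblock, Pprod_full, offBlockProd, ← Finset.prod_mul_distrib]
  refine Finset.prod_congr rfl fun j _ => ?_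
  rw [← Finset.prod_mul_distrib]
  refine Finset.prod_congr rfl fun k _ => ?_
  by_cases hjk : (a ≤ j.val ∧ j.val < a + n) ∧ (a ≤ k.val ∧ k.val < a + n)
  · simp [hjk]
  · simp only [hjk, and_false, if_false, not_false_eq_true, and_true, one_mul]

/-- Reducibility on a block survives multiplication by a function that is symmetric in the
variables of that block. -/
theorem PReducible.of_block {β γ : ℂ} {M a n : ℕ} (hab : a + n ≤ M) {h : (Fin n → ℂ) → ℂ}
    {R : (Fin M → ℂ) → ℂ} (hh : PReducible β γ n 1 n h)
    (hR : ∀ (t : Equiv.Perm (Fin n)) (v : Fin M → ℂ), R (v ∘ blockPerm hab t) = R v) :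
    PReducible β γ M 1 M (fun v => h (seg M a n v) * R v) := by
  intro v
  rw [Pop_full]
  set F : Equiv.Perm (Fin M) → ℂ := fun s =>
    ((Equiv.Perm.sign s : ℤ) : ℂ) * Pprod β γ M 1 M (v ∘ s) *
      (h (seg M a n (v ∘ s)) * R (v ∘ s)) with hF
  have hterm : ∀ (s : Equiv.Perm (Fin M)) (t : Equiv.Perm (Fin n)),
      F (s * blockPerm hab t) =
        ((Equiv.Perm.sign s : ℤ) : ℂ) * offBlockProd β γ M a n (v ∘ s) * R (v ∘ s) *
        (((Equiv.Perm.sign t : ℤ) : ℂ) * Pprod β γ n 1 n (seg M a n (v ∘ s) ∘ t) *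
          h (seg M a n (v ∘ s) ∘ t)) := by
    intro s t
    have hsign : Equiv.Perm.sign (blockPerm hab t) = Equiv.Perm.sign t :=
      Equiv.Perm.viaFintypeEmbedding_sign ..
    simp only [hF, Equiv.Perm.coe_mul, ← Function.comp_assoc, Pprod_eq_block_mul β γ hab,
      offBlockProd_comp_blockPerm, seg_comp_blockPerm, hR, Equiv.Perm.sign_mul, hsign]
    push_cast
    ring
  have havg : ∑ _t : Equiv.Perm (Fin n), ∑ s, F s = 0 := by
    calc ∑ _t : Equiv.Perm (Fin n), ∑ s, F s
        = ∑ t : Equiv.Perm (Fin n), ∑ s, F (s * blockPerm hab t) :=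
          Finset.sum_congr rfl fun t _ =>
            (Equiv.sum_comp (Equiv.mulRight (blockPerm hab t)) F).symm
      _ = ∑ s, ∑ t : Equiv.Perm (Fin n), F (s * blockPerm hab t) := Finset.sum_comm
      _ = 0 := by
          refine Finset.sum_eq_zero fun s _ => ?_
          simp only [hterm]
          rw [← Finset.mul_sum, ← Pop_full, hh, mul_zero]
  rw [Finset.sum_const, smul_eq_zero] at havg
  exact havg.resolve_left (by simp [Fintype.card_ne_zero])

/-- The product of the cluster functions of consecutive clusters, the first starting at `a`. -/
noncomputable def clusterProd (Q : (n : ℕ) → (Fin n → ℂ) → ℂ) (M : ℕ) (v : Fin M → ℂ) :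
    ℕ → List ℕ → ℂ
  | _, [] => 1
  | a, n :: l => Q n (seg M a n v) * clusterProd Q M v (a + n) l

theorem prod_eq_clusterProd (Q : (n : ℕ) → (Fin n → ℂ) → ℂ) (M : ℕ) (v : Fin M → ℂ)
    (m : List ℕ) (a : ℕ) :
    ∏ j : Fin m.length, Q (m.get j) (seg M (a + (m.take j.val).sum) (m.get j) v) =
      clusterProd Q M v a m := by
  induction m generalizing a with
  | nil => simp [clusterProd]
  | cons n l ih =>
    rw [clusterProd, ← ih]
    simp only [List.length_cons]
    rw [Fin.prod_univ_succ]
    simp only [Fin.val_zero, List.take_zero, List.sum_nil, add_zero, List.get_cons_zero,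
      List.get_cons_succ', Fin.val_succ, List.take_succ_cons, List.sum_cons, add_assoc]

theorem Qm_eq_clusterProd (Q : (n : ℕ) → (Fin n → ℂ) → ℂ) (M : ℕ) (m : List ℕ)
    (v : Fin M → ℂ) : Qm Q M m v = clusterProd Q M v 0 m := by
  rw [← prod_eq_clusterProd]
  simp [Qm]

theorem clusterProd_append (Q : (n : ℕ) → (Fin n → ℂ) → ℂ) (M : ℕ) (v : Fin M → ℂ)
    (l r : List ℕ) (a : ℕ) :
    clusterProd Q M v a (l ++ r) = clusterProd Q M v a l * clusterProd Q M v (a + l.sum) r := by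
  induction l generalizing a with
  | nil => simp [clusterProd]
  | cons n l ih => simp [clusterProd, ih, mul_assoc, add_assoc]

theorem clusterProd_comp_blockPerm (Q : (n : ℕ) → (Fin n → ℂ) → ℂ) {M a n : ℕ}
    (hab : a + n ≤ M) (t : Equiv.Perm (Fin n)) (v : Fin M → ℂ) (l : List ℕ) (b : ℕ)
    (h : b + l.sum ≤ a ∨ a + n ≤ b) :
    clusterProd Q M (v ∘ blockPerm hab t) b l = clusterProd Q M v b l := by
  induction l generalizing b with
  | nil => rfl
  | cons c l ih =>
    rw [List.sum_cons] at h
    rw [clusterProd, clusterProd, ih _ (by omega),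
      seg_comp_blockPerm_of_disjoint hab t v b c (by omega)]

theorem List.sum_take_add_get_le (m : List ℕ) (j : Fin m.length) {i : ℕ} (h : j.val < i) :
    (m.take j.val).sum + m.get j ≤ (m.take i).sum := by
  rw [List.get_eq_getElem, ← List.sum_take_succ m j.val j.isLt]
  exact (List.take_sublist_take_left (l := m) h).sum_le_sum fun _ _ => Nat.zero_le _

theorem expFactor_comp_blockPerm {M : ℕ} (m : List ℕ) (x : Fin m.length → ℝ)
    (k : Fin m.length) (hab : (m.take k.val).sum + m.get k ≤ M)
    (t : Equiv.Perm (Fin (m.get k))) (v : Fin M → ℂ) :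
    expFactor M m x (v ∘ blockPerm hab t) = expFactor M m x v := by
  unfold expFactor
  congr 1
  refine Finset.sum_congr rfl fun j _ => ?_
  congr 1
  rcases lt_trichotomy j k with hjk | rfl | hjk
  · rw [seg_comp_blockPerm_of_disjoint]
    exact Or.inl (m.sum_take_add_get_le j hjk)
  · rw [seg_comp_blockPerm]
    exact Equiv.sum_comp t _
  · rw [seg_comp_blockPerm_of_disjoint]
    exact Or.inr (m.sum_take_add_get_le k hjk)

theorem stmt_18 (M : ℕ) (hM : 1 ≤ M) (β γ : ℂ)
    (Q : (n : ℕ) → (Fin n → ℂ) → ℂ)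
    (hQpoly : ∀ n : ℕ, ∃ p : MvPolynomial (Fin n) ℂ, ∀ v, Q n v = MvPolynomial.eval v p)
    (hQ1 : ∀ v : Fin 1 → ℂ, Q 1 v = 1)
    (hbulk : ∀ n : ℕ, 2 ≤ n → PReducible β γ n 1 n (fun v =>
      (Ktilde n v + ((n : ℂ) ^ 3 - (n : ℂ)) * γ) * Q n v
        + β * ∑ n₁ ∈ Finset.Ioo 0 n,
            (Real.sqrt ((n₁ : ℝ) * ((n - n₁ : ℕ) : ℝ) * (n : ℝ)) : ℂ)
              * Q n₁ (seg n 0 n₁ v) * Q (n - n₁) (seg n n₁ (n - n₁) v)))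
    (hjump : ∀ n₁ n₂ : ℕ, 1 ≤ n₁ → 1 ≤ n₂ → PReducible β γ (n₁ + n₂) 1 (n₁ + n₂) (fun v =>
      Vseg n₁ n₂ (n₁ + n₂) v * Q n₁ (seg (n₁ + n₂) 0 n₁ v) * Q n₂ (seg (n₁ + n₂) n₁ n₂ v)
        + Vseg n₂ n₁ (n₁ + n₂) v * Q n₂ (seg (n₁ + n₂) 0 n₂ v)
            * Q n₁ (seg (n₁ + n₂) n₂ n₁ v)
        + 2 * (n₁ : ℂ) * (n₂ : ℂ) * betaC β n₁ n₂ * Q (n₁ + n₂) v)) :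
    ∀ (m : List ℕ), (∀ x ∈ m, 0 < x) → m.sum = M →
    ∀ (k : Fin m.length) (n₁ n₂ : ℕ), 1 ≤ n₁ → 1 ≤ n₂ → n₁ + n₂ = m.get k →
    ∀ x : Fin m.length → ℝ,
    PReducible β γ M 1 M (fun v =>
      (Vseg n₁ n₂ (m.get k) (seg M ((m.take k.val).sum) (m.get k) v)
          * Qm Q M (m.take k.val ++ [n₁, n₂] ++ m.drop (k.val + 1)) v
        + Vseg n₂ n₁ (m.get k) (seg M ((m.take k.val).sum) (m.get k) v)
          * Qm Q M (m.take k.val ++ [n₂, n₁] ++ m.drop (k.val + 1)) v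
        + 2 * (n₁ : ℂ) * (n₂ : ℂ) * betaC β n₁ n₂ * Qm Q M m v)
      * expFactor M m x v) := by
  intro m _ hsum k n₁ n₂ h₁ h₂ hn x
  have hab : (m.take k.val).sum + m.get k ≤ M := by
    have h := m.sum_take_add_get_le k k.isLt
    rwa [List.take_length, hsum] at h
  have hcluster : ∀ n, n₁ + n₂ = n → PReducible β γ n 1 n (fun v =>
      Vseg n₁ n₂ n v * Q n₁ (seg n 0 n₁ v) * Q n₂ (seg n n₁ n₂ v)
        + Vseg n₂ n₁ n v * Q n₂ (seg n 0 n₂ v) * Q n₁ (seg n n₂ n₁ v)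
        + 2 * (n₁ : ℂ) * (n₂ : ℂ) * betaC β n₁ n₂ * Q n v) := by
    rintro _ rfl
    exact hjump n₁ n₂ h₁ h₂
  have hsplit : m = m.take k.val ++ [m.get k] ++ m.drop (k.val + 1) := by simp
  have hred := PReducible.of_block hab (hcluster _ hn)
    (R := fun v => clusterProd Q M v 0 (m.take k.val) *
      clusterProd Q M v ((m.take k.val).sum + m.get k) (m.drop (k.val + 1)) * expFactor M m x v)
    (fun t v => by
      simp only [expFactor_comp_blockPerm]
      rw [clusterProd_comp_blockPerm Q hab t v _ 0 (Or.inl (by simp)),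
        clusterProd_comp_blockPerm Q hab t v _ _ (Or.inr le_rfl)])
  convert hred using 2 with v
  have hQ : Qm Q M m v = clusterProd Q M v 0 (m.take k.val) *
      Q (m.get k) (seg M (m.take k.val).sum (m.get k) v) *
      clusterProd Q M v ((m.take k.val).sum + m.get k) (m.drop (k.val + 1)) := by
    rw [Qm_eq_clusterProd]
    conv_lhs => rw [hsplit]
    rw [clusterProd_append, clusterProd_append, List.sum_append, List.sum_singleton]
    simp only [clusterProd, mul_one, zero_add]
  have hQpair : ∀ p q, p + q = m.get k →
      Qm Q M (m.take k.val ++ [p, q] ++ m.drop (k.val + 1)) v =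
        clusterProd Q M v 0 (m.take k.val) *
        (Q p (seg M ((m.take k.val).sum + 0) p v) * Q q (seg M ((m.take k.val).sum + p) q v)) *
        clusterProd Q M v ((m.take k.val).sum + m.get k) (m.drop (k.val + 1)) := by
    intro p q hpq
    rw [Qm_eq_clusterProd, ← hpq]
    simp [clusterProd_append, clusterProd, mul_assoc, add_assoc]
  rw [hQ, hQpair n₁ n₂ hn, hQpair n₂ n₁ (by omega), seg_seg (by omega), seg_seg (by omega),
    seg_seg (by omega), seg_seg (by omega)]
  ring
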